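/- arXiv:1612.01933 — 7 statements merged into one kernel-verified Lean document; each statement's English description precedes it below -/
import Mathlib

section
/- For every n ≥ 1 and every t ∈ ℝ, the recurrence coefficient β_n satisfies the extended relativistic Toda lattice equation β_n'(t) = p·β_n(t)·(α_n(t) − α_{n+1}(t)) + q·β_n(t)·( α_{n+1}(t)/(β_{n+1}(t)·β_n(t)) − α_n(t)/(β_n(t)·β_{n−1}(t)) ). -/
open Polynomial

/-- The moment functional `L^{(t)}` applied to `x^m · P(x)`, where the moments are
`L^{(t)}[x^k] = ν k t`. -/
noncomputable def Lmom (ν : ℤ → ℝ → ℂ) (m : ℤ) (P : Polynomial ℂ) (t : ℝ) : ℂ :=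
  P.sum fun j c => c * ν (m + (j : ℤ)) t

lemma Lmom_add (ν : ℤ → ℝ → ℂ) (m : ℤ) (P R : Polynomial ℂ) (t : ℝ) :
    Lmom ν m (P + R) t = Lmom ν m P t + Lmom ν m R t := by
  unfold Lmom
  exact Polynomial.sum_add_index P R _ (by simp) (by intros; ring)

lemma Lmom_monomial (ν : ℤ → ℝ → ℂ) (m : ℤ) (k : ℕ) (a : ℂ) (t : ℝ) :
    Lmom ν m (monomial k a) t = a * ν (m + k) t := by
  unfold Lmom
  exact Polynomial.sum_monomial_index a _ (by simp)

lemma Lmom_C_mul (ν : ℤ → ℝ → ℂ) (m : ℤ) (c : ℂ) (P : Polynomial ℂ) (t : ℝ) :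
    Lmom ν m (C c * P) t = c * Lmom ν m P t := by
  induction P using Polynomial.induction_on' with
  | add P R hP hR => rw [mul_add, Lmom_add, Lmom_add, hP, hR]; ring
  | monomial k a => rw [C_mul_monomial, Lmom_monomial, Lmom_monomial]; ring

lemma Lmom_X_mul (ν : ℤ → ℝ → ℂ) (m : ℤ) (P : Polynomial ℂ) (t : ℝ) :
    Lmom ν m (X * P) t = Lmom ν (m + 1) P t := by
  induction P using Polynomial.induction_on' with
  | add P R hP hR => rw [mul_add, Lmom_add, Lmom_add, hP, hR]
  | monomial k a =>
    rw [X_mul_monomial, Lmom_monomial, Lmom_monomial]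
    congr 2
    push_cast; ring

lemma Lmom_sub (ν : ℤ → ℝ → ℂ) (m : ℤ) (P R : Polynomial ℂ) (t : ℝ) :
    Lmom ν m (P - R) t = Lmom ν m P t - Lmom ν m R t := by
  have h : P - R = P + C (-1) * R := by simp [sub_eq_add_neg]
  rw [h, Lmom_add, Lmom_C_mul]; ring

lemma Lmom_range (ν : ℤ → ℝ → ℂ) (m : ℤ) (P : Polynomial ℂ) (t : ℝ) (N : ℕ)
    (h : P.natDegree < N) :
    Lmom ν m P t = ∑ j ∈ Finset.range N, P.coeff j * ν (m + (j : ℤ)) t := by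
  unfold Lmom
  exact Polynomial.sum_over_range' P (by simp) N h

theorem stmt_0 (p q : ℂ) (ν : ℤ → ℝ → ℂ)
    (hνdiff : ∀ k, Differentiable ℝ (ν k))
    (hνderiv : ∀ k t, deriv (ν k) t = -(p * ν (k + 1) t + q * ν (k - 1) t))
    (hν0 : ∀ t, ν 0 t ≠ 0)
    (Q : ℕ → ℝ → Polynomial ℂ)
    (hQ0 : ∀ t, Q 0 t = 1)
    (hQmonic : ∀ n t, (Q n t).Monic)
    (hQdeg : ∀ n t, (Q n t).natDegree = n)
    (hQdiff : ∀ n j, Differentiable ℝ fun t => (Q n t).coeff j)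
    (β α : ℕ → ℝ → ℂ)
    (hβdiff : ∀ n, Differentiable ℝ (β n))
    (hαdiff : ∀ n, Differentiable ℝ (α n))
    (hβ0 : ∀ t, β 0 t = 1) (hα0 : ∀ t, α 0 t = -1) (hα1 : ∀ t, α 1 t = 0)
    (hβne : ∀ n, 1 ≤ n → ∀ t, β n t ≠ 0)
    (hαne : ∀ n, 1 ≤ n → ∀ t, α (n + 1) t ≠ 0)
    (horth : ∀ n : ℕ, 1 ≤ n → ∀ s < n, ∀ t : ℝ, Lmom ν (-(n : ℤ) + (s : ℤ)) (Q n t) t = 0)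
    (hQ1 : ∀ t, Q 1 t = X - C (β 1 t))
    (hrec : ∀ n, 1 ≤ n → ∀ t,
      Q (n + 1) t = (X - C (β (n + 1) t)) * Q n t - C (α (n + 1) t) * (X * Q (n - 1) t)) :
    ∀ n, 1 ≤ n → ∀ t : ℝ,
      deriv (β n) t =
        p * β n t * (α n t - α (n + 1) t) +
          q * β n t *
            (α (n + 1) t / (β (n + 1) t * β n t) - α n t / (β n t * β (n - 1) t)) := by
  -- orthogonality
  have ho : ∀ n j : ℕ, 1 ≤ j → j ≤ n → ∀ t, Lmom ν (-(j : ℤ)) (Q n t) t = 0 := by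
    intro n j hj hjn t
    have := horth n (by omega) (n - j) (by omega) t
    rw [Nat.cast_sub hjn] at this
    convert this using 2
    ring
  -- the recurrence under the functional
  have hL : ∀ n, 1 ≤ n → ∀ t (m : ℤ), Lmom ν m (Q (n + 1) t) t =
      Lmom ν (m + 1) (Q n t) t - β (n + 1) t * Lmom ν m (Q n t) t
        - α (n + 1) t * Lmom ν (m + 1) (Q (n - 1) t) t := by
    intro n hn t m
    rw [hrec n hn t, sub_mul, Lmom_sub, Lmom_sub, Lmom_C_mul, Lmom_C_mul, Lmom_X_mul, Lmom_X_mul]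
  have hL0 : ∀ t (m : ℤ), Lmom ν m (Q 0 t) t = ν m t := by
    intro t m
    rw [hQ0, ← monomial_zero_one, Lmom_monomial]; simp
  have hL1 : ∀ t (m : ℤ), Lmom ν m (Q 1 t) t = ν (m + 1) t - β 1 t * ν m t := by
    intro t m
    have h : Q 1 t = X * Q 0 t - C (β 1 t) * Q 0 t := by rw [hQ1, hQ0]; simp
    rw [h, Lmom_sub, Lmom_X_mul, Lmom_C_mul, hL0, hL0]
  have hσ : ∀ n t, Lmom ν 0 (Q (n + 1) t) t = α (n + 2) t * Lmom ν 0 (Q n t) t := by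
    intro n t
    have h := hL (n + 1) (by omega) t (-1)
    have h1 := ho (n + 2) 1 (by omega) (by omega) t
    have h2 := ho (n + 1) 1 (by omega) (by omega) t
    simp only [Nat.cast_one] at h1 h2
    rw [h1, h2] at h
    simp only [Nat.add_sub_cancel, neg_add_cancel] at h
    linear_combination -h
  have hτ : ∀ n t, β (n + 2) t * Lmom ν (-((n + 2 : ℕ) : ℤ)) (Q (n + 1) t) t =
      - (α (n + 2) t * Lmom ν (-((n + 1 : ℕ) : ℤ)) (Q n t) t) := by
    intro n t
    have h := hL (n + 1) (by omega) t (-((n + 2 : ℕ) : ℤ))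
    have h1 := ho (n + 2) (n + 2) (by omega) (by omega) t
    have h2 := ho (n + 1) (n + 1) (by omega) (by omega) t
    have e : (-((n + 2 : ℕ) : ℤ)) + 1 = -((n + 1 : ℕ) : ℤ) := by push_cast; ring
    rw [h1, e, h2] at h
    simp only [Nat.add_sub_cancel] at h
    linear_combination h
  have hσne : ∀ n t, Lmom ν 0 (Q n t) t ≠ 0 := by
    intro n t
    induction n with
    | zero => rw [hL0]; exact hν0 t
    | succ n ih => rw [hσ]; exact mul_ne_zero (hαne (n + 1) (by omega) t) ih
  have hτne : ∀ n t, Lmom ν (-((n + 1 : ℕ) : ℤ)) (Q n t) t ≠ 0 := by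
    intro n t
    induction n with
    | zero =>
      rw [hL0]
      have h := ho 1 1 le_rfl le_rfl t
      rw [hL1] at h
      intro h0
      simp only [zero_add, Nat.cast_one, neg_add_cancel] at h h0
      rw [h0] at h
      exact hν0 t (by simpa using h)
    | succ n ih =>
      intro h0
      have h := hτ n t
      rw [show (-((n + 2 : ℕ) : ℤ)) = -((n + 1 + 1 : ℕ) : ℤ) from rfl, h0] at h
      have := mul_ne_zero (hαne (n + 1) (by omega) t) ih
      apply this
      linear_combination h
  -- uniqueness
  have huniq : ∀ n t (R : Polynomial ℂ), (∀ j, n ≤ j → R.coeff j = 0) →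
      (∀ j : ℕ, 1 ≤ j → j ≤ n → Lmom ν (-(j : ℤ)) R t = 0) → R = 0 := by
    intro n t
    induction n with
    | zero => intro R hR _; ext j; simpa using hR j (Nat.zero_le _)
    | succ n ih =>
      intro R hR hj
      have h0 : R - C (R.coeff n) * Q n t = 0 := by
        apply ih
        · intro j hjn
          rw [coeff_sub, coeff_C_mul]
          rcases hjn.eq_or_lt with rfl | hlt
          · have := (hQmonic n t).coeff_natDegree
            rw [hQdeg] at this
            rw [this]; ring
          · rw [hR j hlt, coeff_eq_zero_of_natDegree_lt (by rw [hQdeg]; exact hlt : (Q n t).natDegree < j)]; ring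
        · intro j h1 h2
          rw [Lmom_sub, Lmom_C_mul, hj j h1 (by omega), ho n j h1 h2]; ring
      have h1 := hj (n + 1) (by omega) le_rfl
      have h2 : R = C (R.coeff n) * Q n t := sub_eq_zero.mp h0
      rw [h2, Lmom_C_mul] at h1
      have h3 := (mul_eq_zero.mp h1).resolve_right (hτne n t)
      rw [h2, h3]; simp
  -- derivative of Q
  let D : ℕ → ℝ → Polynomial ℂ := fun n t =>
    ∑ j ∈ Finset.range (n + 1), monomial j (deriv (fun s => (Q n s).coeff j) t)
  have hlead : ∀ n t, (Q n t).coeff n = 1 := by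
    intro n t
    have := (hQmonic n t).coeff_natDegree
    rwa [hQdeg] at this
  have hDc : ∀ n t j, (D n t).coeff j = deriv (fun s => (Q n s).coeff j) t := by
    intro n t j
    simp only [D, finsetSum_coeff, coeff_monomial]
    rw [Finset.sum_ite_eq' (Finset.range (n + 1)) j]
    split_ifs with h
    · rfl
    · have : (fun s => (Q n s).coeff j) = fun _ => 0 := by
        funext s
        apply coeff_eq_zero_of_natDegree_lt
        rw [hQdeg]; simpa using h
      rw [this]; simp
  have hDn : ∀ n t j, n ≤ j → (D n t).coeff j = 0 := by
    intro n t j hj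
    rw [hDc]
    rcases hj.eq_or_lt with rfl | hlt
    · simp [hlead]
    · have : (fun s => (Q n s).coeff j) = fun _ => 0 := by
        funext s
        apply coeff_eq_zero_of_natDegree_lt
        rw [hQdeg]; exact hlt
      rw [this]; simp
  have hDL : ∀ n (m : ℤ) t, HasDerivAt (fun s => Lmom ν m (Q n s) s)
      (Lmom ν m (D n t) t - (p * Lmom ν (m + 1) (Q n t) t + q * Lmom ν (m - 1) (Q n t) t)) t := by
    intro n m t
    have e : (fun s => Lmom ν m (Q n s) s) = fun s =>
        ∑ j ∈ Finset.range (n + 1), (Q n s).coeff j * ν (m + (j : ℤ)) s := by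
      funext s
      exact Lmom_range _ _ _ _ _ (by rw [hQdeg]; omega)
    have hd : (D n t).natDegree < n + 1 := by
      rw [Nat.lt_succ_iff, natDegree_le_iff_coeff_eq_zero]
      intro N hN
      exact hDn n t N hN.le
    rw [e, Lmom_range _ _ (D n t) _ _ hd,
      Lmom_range _ _ (Q n t) _ (n + 1) (by rw [hQdeg]; omega),
      Lmom_range _ _ (Q n t) _ (n + 1) (by rw [hQdeg]; omega),
      Finset.mul_sum, Finset.mul_sum, ← Finset.sum_add_distrib, ← Finset.sum_sub_distrib]
    apply HasDerivAt.fun_sum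
    intro j _
    have h := ((hQdiff n j) t).hasDerivAt.mul ((hνdiff (m + j)) t).hasDerivAt
    rw [hνderiv] at h
    refine h.congr_deriv ?_
    rw [hDc, show m + 1 + (j : ℤ) = m + j + 1 by ring, show m - 1 + (j : ℤ) = m + j - 1 by ring]
    ring
  have hDo : ∀ n (j : ℕ) t, 1 ≤ j → j ≤ n → Lmom ν (-(j : ℤ)) (D n t) t =
      p * Lmom ν (-(j : ℤ) + 1) (Q n t) t + q * Lmom ν (-(j : ℤ) - 1) (Q n t) t := by
    intro n j t h1 h2
    have h := (hDL n (-(j : ℤ)) t).deriv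
    have e : (fun s => Lmom ν (-(j : ℤ)) (Q n s) s) = fun _ => 0 := by
      funext s; exact ho n j h1 h2 s
    rw [e] at h
    simp only [deriv_const] at h
    linear_combination -h
  -- formula for D
  have hDf : ∀ n t, D (n + 1) t = C (-(q * (α (n + 2) t / β (n + 2) t))) * Q n t
      + C (-(p * α (n + 2) t)) * (Q (n + 1) t - X * Q n t) := by
    intro n t
    rw [← sub_eq_zero]
    apply huniq (n + 1) t
    · intro j hj
      rw [coeff_sub, hDn (n + 1) t j hj, coeff_add, coeff_C_mul, coeff_C_mul, coeff_sub]
      obtain ⟨i, rfl⟩ : ∃ i, j = i + 1 := ⟨j - 1, by omega⟩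
      rw [coeff_X_mul, coeff_eq_zero_of_natDegree_lt (by rw [hQdeg]; omega : (Q n t).natDegree < i + 1)]
      rcases hj.eq_or_lt with h | h
      · have : i = n := by omega
        subst this
        rw [hlead, hlead]; ring
      · rw [coeff_eq_zero_of_natDegree_lt (by rw [hQdeg]; omega : (Q n t).natDegree < i),
          coeff_eq_zero_of_natDegree_lt (by rw [hQdeg]; omega : (Q (n + 1) t).natDegree < i + 1)]
        ring
    · intro j h1 h2
      rw [Lmom_sub, hDo (n + 1) j t h1 h2, Lmom_add, Lmom_C_mul, Lmom_C_mul, Lmom_sub, Lmom_X_mul,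
        ho (n + 1) j h1 h2]
      have hp : Lmom ν (-(j : ℤ) + 1) (Q (n + 1) t) t
          = α (n + 2) t * Lmom ν (-(j : ℤ) + 1) (Q n t) t := by
        rcases h1.eq_or_lt with rfl | h
        · simpa using hσ n t
        · have e : -(j : ℤ) + 1 = -((j - 1 : ℕ) : ℤ) := by omega
          rw [e, ho (n + 1) (j - 1) (by omega) (by omega), ho n (j - 1) (by omega) (by omega)]
          ring
      have hq : Lmom ν (-(j : ℤ) - 1) (Q (n + 1) t) t
          = -(α (n + 2) t / β (n + 2) t) * Lmom ν (-(j : ℤ)) (Q n t) t := by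
        have hb := hβne (n + 2) (by omega) t
        have e : -(j : ℤ) - 1 = -((j + 1 : ℕ) : ℤ) := by push_cast; ring
        rw [e]
        rcases h2.eq_or_lt with rfl | h
        · have := hτ n t
          field_simp
          linear_combination this
        · rw [ho (n + 1) (j + 1) (by omega) (by omega), ho n j h1 (by omega)]
          ring
      rw [hp, hq]
      ring
  -- constant terms
  have hc : ∀ n t, (Q (n + 1) t).coeff 0 = -(β (n + 1) t) * (Q n t).coeff 0 := by
    intro n t
    rcases Nat.eq_zero_or_pos n with rfl | hn
    · rw [zero_add, hQ1, hQ0]; simp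
    · rw [hrec n hn t]
      simp [mul_coeff_zero]
  have hcne : ∀ n t, (Q n t).coeff 0 ≠ 0 := by
    intro n t
    induction n with
    | zero => rw [hQ0]; simp
    | succ n ih => rw [hc]; exact mul_ne_zero (neg_ne_zero.mpr (hβne _ (by omega) t)) ih
  have hβn : ∀ n t, β n t ≠ 0 := by
    intro n t
    rcases Nat.eq_zero_or_pos n with rfl | hn
    · rw [hβ0]; simp
    · exact hβne n hn t
  have hD0 : ∀ n t, deriv (fun s => (Q n s).coeff 0) t =
      (q * (α (n + 1) t / (β (n + 1) t * β n t)) - p * α (n + 1) t) * (Q n t).coeff 0 := by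
    intro n t
    rcases n with _ | n
    · simp [hQ0, hα1]
    · rw [← hDc, hDf, coeff_add, coeff_C_mul, coeff_C_mul, coeff_sub, coeff_X_mul_zero, hc]
      have h1 := hβn (n + 1) t
      have h2 := hβn (n + 2) t
      field_simp
      ring
  intro n hn t
  obtain ⟨n, rfl⟩ : ∃ k, n = k + 1 := ⟨n - 1, by omega⟩
  have h : deriv (fun s => (Q (n + 1) s).coeff 0) t =
      -(deriv (β (n + 1)) t) * (Q n t).coeff 0
        + -(β (n + 1) t) * deriv (fun s => (Q n s).coeff 0) t := by
    have e : (fun s => (Q (n + 1) s).coeff 0) = fun s => -(β (n + 1) s) * (Q n s).coeff 0 := by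
      funext s; exact hc n s
    rw [e]
    exact ((hβdiff (n + 1) t).hasDerivAt.neg.mul (hQdiff n 0 t).hasDerivAt).deriv
  rw [hD0, hD0, hc] at h
  simp only [Nat.add_sub_cancel]
  apply mul_right_cancel₀ (hcne n t)
  linear_combination h
end

section
/- For every n ≥ 1 and every t ∈ ℝ, the quantities γ_n(t) = α_{n+1}(t) + β_n(t) satisfy γ_n'(t) = p·( α_n(t)·γ_n(t) − α_{n+1}(t)·γ_{n+1}(t) ) + q·( α_{n+1}(t)/β_n(t) − α_n(t)/β_{n−1}(t) ). -/
theorem stmt_2 (p q : ℂ) (β α : ℕ → ℝ → ℂ)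
    (hβdiff : ∀ n, Differentiable ℝ (β n))
    (hαdiff : ∀ n, Differentiable ℝ (α n))
    (hβne : ∀ n t, β n t ≠ 0)
    (hβ0 : ∀ t, β 0 t = 1) (hα0 : ∀ t, α 0 t = -1) (hα1 : ∀ t, α 1 t = 0)
    (hβeq : ∀ n, 1 ≤ n → ∀ t, deriv (β n) t =
      p * β n t * (α n t - α (n + 1) t) +
        q * β n t *
          (α (n + 1) t / (β (n + 1) t * β n t) - α n t / (β n t * β (n - 1) t)))
    (hαeq : ∀ n, 1 ≤ n → ∀ t, deriv (α n) t =
      p * α n t * (α (n - 1) t + β (n - 1) t - α (n + 1) t - β n t) +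
        q * α n t * (1 / β (n - 1) t - 1 / β n t)) :
    ∀ n, 1 ≤ n → ∀ t : ℝ,
      deriv (fun s => α (n + 1) s + β n s) t =
        p * (α n t * (α (n + 1) t + β n t) - α (n + 1) t * (α (n + 2) t + β (n + 1) t)) +
          q * (α (n + 1) t / β n t - α n t / β (n - 1) t) := by
  intro n hn t
  have h1 := hβne n t
  have h2 := hβne (n + 1) t
  have h3 := hβne (n - 1) t
  have e := hαeq (n + 1) (by omega) t
  rw [Nat.add_sub_cancel] at e
  have hd : deriv (fun s => α (n + 1) s + β n s) t = deriv (α (n + 1)) t + deriv (β n) t :=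
    ((hαdiff (n + 1) t).hasDerivAt.add (hβdiff n t).hasDerivAt).deriv
  rw [hd, e, hβeq n hn t]
  field_simp
  ring
end

section
/- Suppose the extended relativistic Toda lattice equations hold: for all n ≥ 1 and all t, α_n'(t) = p·α_n(t)·(α_{n−1}(t) + γ_{n−1}(t) − α_n(t) − γ_n(t)) + q·α_n(t)·( 1/(γ_{n−1}(t) − α_n(t)) − 1/(γ_n(t) − α_{n+1}(t)) ) and γ_n'(t) = p·( α_n(t)·γ_n(t) − α_{n+1}(t)·γ_{n+1}(t) ) + q·( α_{n+1}(t)/(γ_n(t) − α_{n+1}(t)) − α_n(t)/(γ_{n−1}(t) − α_n(t)) ). Then the infinite Lax pair representation dH/dt = H·F − F·H holds entrywise: for all indices i, j ≥ 1 and all t, the derivative of the (i,j) entry of H(t) equals (H(t)F(t))_{ij} − (F(t)H(t))_{ij}, where (HF)_{ij} = H_{i,j−1}F_{j−1,j} + H_{i,j}F_{j,j} + H_{i,j+1}F_{j+1,j} and (FH)_{ij} = F_{i,i−1}H_{i−1,j} + F_{i,i}H_{i,j} + F_{i,i+1}H_{i+1,j} (all other terms vanish since F is tridiagonal). -/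
theorem stmt_3 (p q : ℂ) (α γ : ℕ → ℝ → ℂ)
    (hαdiff : ∀ n, Differentiable ℝ (α n))
    (hγdiff : ∀ n, Differentiable ℝ (γ n))
    (hα0 : ∀ t, α 0 t = -1) (hα1 : ∀ t, α 1 t = 0) (hγ0 : ∀ t, γ 0 t = 1)
    (hne : ∀ n t, γ n t - α (n + 1) t ≠ 0)
    (hαeq : ∀ n, 1 ≤ n → ∀ t, deriv (α n) t =
      p * α n t * (α (n - 1) t + γ (n - 1) t - α n t - γ n t) +
        q * α n t *
          (1 / (γ (n - 1) t - α n t) - 1 / (γ n t - α (n + 1) t)))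
    (hγeq : ∀ n, 1 ≤ n → ∀ t, deriv (γ n) t =
      p * (α n t * γ n t - α (n + 1) t * γ (n + 1) t) +
        q * (α (n + 1) t / (γ n t - α (n + 1) t) - α n t / (γ (n - 1) t - α n t)))
    (H F : ℕ → ℕ → ℝ → ℂ)
    (hH : ∀ i j t, H i j t = if i ≤ j then γ j t else if j + 1 = i then α i t else 0)
    (hF : ∀ i j t, F i j t =
      if i = j then p * α i t + q / (γ i t - α (i + 1) t)
      else if i + 1 = j then -(q / (γ i t - α (i + 1) t))
      else if j + 1 = i then -(p * α i t)
      else 0) :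
    ∀ i j, 1 ≤ i → 1 ≤ j → ∀ t : ℝ,
      deriv (H i j) t =
        (H i (j - 1) t * F (j - 1) j t + H i j t * F j j t + H i (j + 1) t * F (j + 1) j t) -
          (F i (i - 1) t * H (i - 1) j t + F i i t * H i j t + F i (i + 1) t * H (i + 1) j t) := by
  intro i j hi hj t
  obtain ⟨m, rfl⟩ : ∃ m, i = m + 1 := ⟨i - 1, by omega⟩
  obtain ⟨n, rfl⟩ : ∃ n, j = n + 1 := ⟨j - 1, by omega⟩
  have hHf : H (m + 1) (n + 1) = fun t => if m + 1 ≤ n + 1 then γ (n + 1) t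
      else if n + 1 + 1 = m + 1 then α (m + 1) t else 0 := funext fun t => hH _ _ t
  have hγ' := hγeq (n + 1) (by omega) t
  have hα' := hαeq (m + 1) (by omega) t
  simp only [Nat.add_sub_cancel] at hγ' hα' ⊢
  have key : ∀ k, γ k t / (γ k t - α (k + 1) t) = 1 + α (k + 1) t / (γ k t - α (k + 1) t) := by
    intro k
    have := hne k t
    field_simp
    ring
  rcases lt_trichotomy m n with h | h | h
  · have hd : deriv (H (m + 1) (n + 1)) t = deriv (γ (n + 1)) t := by
      rw [hHf]
      simp only [if_pos (show m + 1 ≤ n + 1 by omega)]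
    rw [hd, hγ']
    simp only [hH, hF]
    simp (disch := omega) only [if_pos, if_neg, if_true]
    linear_combination q * key n - q * key (n + 1)
  · subst h
    have hd : deriv (H (m + 1) (m + 1)) t = deriv (γ (m + 1)) t := by
      rw [hHf]
      simp only [if_pos (show m + 1 ≤ m + 1 by omega)]
    rw [hd, hγ']
    simp only [hH, hF]
    simp (disch := omega) only [if_pos, if_neg, if_true]
    ring
  · obtain rfl | h := eq_or_lt_of_le (Nat.succ_le_of_lt h)
    · have hd : deriv (H (n.succ + 1) (n + 1)) t = deriv (α (n.succ + 1)) t := by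
        rw [hHf]
        simp (disch := omega) only [if_pos, if_neg, if_true]
      rw [hd, hα']
      simp only [hH, hF, Nat.succ_eq_add_one]
      simp (disch := omega) only [if_pos, if_neg, if_true]
      ring
    · have hd : deriv (H (m + 1) (n + 1)) t = 0 := by
        rw [hHf]
        simp (disch := omega) only [if_neg]
        simp
      rw [hd]
      simp only [hH, hF]
      obtain rfl | h := eq_or_lt_of_le (Nat.succ_le_of_lt h)
      · simp only [Nat.succ_eq_add_one]
        simp (disch := omega) only [if_pos, if_neg, if_true]
        ring
      · simp only [Nat.succ_eq_add_one] at h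
        simp (disch := omega) only [if_pos, if_neg, if_true]
        ring
end

section
/- Suppose the extended relativistic Toda lattice equations of finite order N hold: for all n = 1, …, N and all t, α_n'(t) = p·α_n(t)·(α_{n−1}(t) + γ_{n−1}(t) − α_n(t) − γ_n(t)) + q·α_n(t)·( 1/(γ_{n−1}(t) − α_n(t)) − 1/(γ_n(t) − α_{n+1}(t)) ) and γ_n'(t) = p·( α_n(t)·γ_n(t) − α_{n+1}(t)·γ_{n+1}(t) ) + q·( α_{n+1}(t)/(γ_n(t) − α_{n+1}(t)) − α_n(t)/(γ_{n−1}(t) − α_n(t)) ). Then the N×N Lax representation holds: for all t, dH_N/dt (t) = H_N(t)·F_N(t) − F_N(t)·H_N(t), where F_N = p·X_N + q·Y_N. -/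
theorem sum_up (N : ℕ) (j : Fin N) (A B : ℕ → ℂ) :
    (∑ k : Fin N, if (k : ℕ) = (j : ℕ) then A k else if (k : ℕ) = (j : ℕ) + 1 then B k else 0)
      = A j + if (j : ℕ) + 1 < N then B (j + 1) else 0 := by
  rw [Fin.sum_univ_eq_sum_range
    (fun k => if k = (j : ℕ) then A k else if k = (j : ℕ) + 1 then B k else 0) N]
  have h : ∀ k, (if k = (j : ℕ) then A k else if k = (j : ℕ) + 1 then B k else 0)
      = (if k = (j : ℕ) then A k else 0) + (if k = (j : ℕ) + 1 then B k else 0) := by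
    intro k
    split_ifs <;> first | omega | simp
  simp only [h, Finset.sum_add_distrib, Finset.sum_ite_eq', Finset.mem_range, j.isLt, if_true]

theorem sum_down (N : ℕ) (j : Fin N) (A B : ℕ → ℂ) :
    (∑ k : Fin N, if (k : ℕ) = (j : ℕ) then A k else if (j : ℕ) = (k : ℕ) + 1 then B k else 0)
      = A j + if 1 ≤ (j : ℕ) then B (j - 1) else 0 := by
  rw [Fin.sum_univ_eq_sum_range
    (fun k => if k = (j : ℕ) then A k else if (j : ℕ) = k + 1 then B k else 0) N]
  have h : ∀ k, (if k = (j : ℕ) then A k else if (j : ℕ) = k + 1 then B k else 0)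
      = (if k = (j : ℕ) then A k else 0) +
        (if k = (j : ℕ) - 1 then (if 1 ≤ (j : ℕ) then B k else 0) else 0) := by
    intro k
    split_ifs <;> first | omega | simp
  have h2 : (j : ℕ) - 1 < N := by omega
  simp only [h, Finset.sum_add_distrib, Finset.sum_ite_eq', Finset.mem_range, j.isLt, h2, if_true]

theorem stmt_4 (p q : ℂ) (N : ℕ) (hN : 1 ≤ N) (α γ : ℕ → ℝ → ℂ)
    (hαdiff : ∀ n, Differentiable ℝ (α n))
    (hγdiff : ∀ n, Differentiable ℝ (γ n))
    (hα0 : ∀ t, α 0 t = -1) (hα1 : ∀ t, α 1 t = 0) (hγ0 : ∀ t, γ 0 t = 1)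
    (hαN : ∀ t, α (N + 1) t = 0)
    (hne : ∀ n, 1 ≤ n → n ≤ N → ∀ t, γ n t - α (n + 1) t ≠ 0)
    (hαeq : ∀ n, 1 ≤ n → n ≤ N → ∀ t, deriv (α n) t =
      p * α n t * (α (n - 1) t + γ (n - 1) t - α n t - γ n t) +
        q * α n t *
          (1 / (γ (n - 1) t - α n t) - 1 / (γ n t - α (n + 1) t)))
    (hγeq : ∀ n, 1 ≤ n → n ≤ N → ∀ t, deriv (γ n) t =
      p * (α n t * γ n t - α (n + 1) t * γ (n + 1) t) +
        q * (α (n + 1) t / (γ n t - α (n + 1) t) - α n t / (γ (n - 1) t - α n t)))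
    (HN XN YN : ℝ → Matrix (Fin N) (Fin N) ℂ)
    (hHN : ∀ t (i j : Fin N), HN t i j =
      if (i : ℕ) ≤ (j : ℕ) then γ ((j : ℕ) + 1) t
      else if (i : ℕ) = (j : ℕ) + 1 then α ((i : ℕ) + 1) t
      else 0)
    (hXN : ∀ t (i j : Fin N), XN t i j =
      if i = j then α ((i : ℕ) + 1) t
      else if (i : ℕ) = (j : ℕ) + 1 then -α ((i : ℕ) + 1) t
      else 0)
    (hYN : ∀ t (i j : Fin N), YN t i j =
      if i = j then 1 / (γ ((i : ℕ) + 1) t - α ((i : ℕ) + 2) t)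
      else if (j : ℕ) = (i : ℕ) + 1 then -(1 / (γ ((i : ℕ) + 1) t - α ((i : ℕ) + 2) t))
      else 0) :
    ∀ (t : ℝ) (i j : Fin N),
      deriv (fun s => HN s i j) t =
        (HN t * (p • XN t + q • YN t) - (p • XN t + q • YN t) * HN t) i j := by
  intro t i j
  let h : ℕ → ℕ → ℂ := fun a b =>
    if a ≤ b then γ (b + 1) t else if a = b + 1 then α (a + 1) t else 0
  let d : ℕ → ℂ := fun a => 1 / (γ (a + 1) t - α (a + 2) t)
  have hh : ∀ a b : Fin N, HN t a b = h a b := fun a b => hHN t a b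
  have hi := i.isLt
  have hj := j.isLt
  have e1 : (HN t * XN t) i j = h i j * α (j + 1) t +
      if (j : ℕ) + 1 < N then h i (j + 1) * (-α (j + 1 + 1) t) else 0 := by
    rw [Matrix.mul_apply, ← sum_up N j (fun k => h i k * α (k + 1) t)
      (fun k => h i k * (-α (k + 1) t))]
    refine Finset.sum_congr rfl fun k _ => ?_
    rw [hh, hXN]
    simp only [Fin.ext_iff]
    split_ifs <;> simp
  have e2 : (XN t * HN t) i j = α (i + 1) t * h i j +
      if 1 ≤ (i : ℕ) then (-α (i + 1) t) * h (i - 1) j else 0 := by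
    rw [Matrix.mul_apply, ← sum_down N i (fun k => α (i + 1) t * h k j)
      (fun k => (-α (i + 1) t) * h k j)]
    refine Finset.sum_congr rfl fun k _ => ?_
    rw [hh, hXN]
    simp only [Fin.ext_iff, eq_comm (a := (i : ℕ)) (b := (k : ℕ))]
    split_ifs <;> simp
  have e3 : (HN t * YN t) i j = h i j * d j +
      if 1 ≤ (j : ℕ) then h i (j - 1) * (-d (j - 1)) else 0 := by
    rw [Matrix.mul_apply, ← sum_down N j (fun k => h i k * d k)
      (fun k => h i k * (-d k))]
    refine Finset.sum_congr rfl fun k _ => ?_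
    rw [hh, hYN]
    simp only [Fin.ext_iff, d]
    split_ifs <;> simp
  have e4 : (YN t * HN t) i j = d i * h i j +
      if (i : ℕ) + 1 < N then (-d i) * h (i + 1) j else 0 := by
    rw [Matrix.mul_apply, ← sum_up N i (fun k => d i * h k j)
      (fun k => (-d i) * h k j)]
    refine Finset.sum_congr rfl fun k _ => ?_
    rw [hh, hYN]
    simp only [Fin.ext_iff, d, eq_comm (a := (i : ℕ)) (b := (k : ℕ))]
    split_ifs <;> simp
  have hd : ∀ a, a < N → (γ (a + 1) t - α (a + 2) t) * d a = 1 := fun a ha =>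
    mul_one_div_cancel (hne (a + 1) (by omega) (by omega) t)
  have e : (HN t * (p • XN t + q • YN t) - (p • XN t + q • YN t) * HN t) i j =
      p * ((HN t * XN t) i j - (XN t * HN t) i j) +
      q * ((HN t * YN t) i j - (YN t * HN t) i j) := by
    simp only [Matrix.mul_add, Matrix.add_mul, Matrix.mul_smul, Matrix.smul_mul,
      Matrix.sub_apply, Matrix.add_apply, Matrix.smul_apply, smul_eq_mul]
    ring
  rw [e, e1, e2, e3, e4]
  clear e e1 e2 e3 e4
  simp only [hHN]
  obtain ⟨i, hi'⟩ := i
  obtain ⟨j, hj'⟩ := j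
  simp only at hi hj ⊢
  clear hi' hj'
  have hX : (if j + 1 < N then h i (j + 1) * (-α (j + 1 + 1) t) else 0)
      = h i (j + 1) * (-α (j + 1 + 1) t) := by
    split_ifs with hc
    · rfl
    · have : j + 1 = N := by omega
      rw [this, hαN]; simp
  have hX2 : (if 1 ≤ i then (-α (i + 1) t) * h (i - 1) j else 0)
      = (-α (i + 1) t) * h (i - 1) j := by
    split_ifs with hc
    · rfl
    · have : i = 0 := by omega
      subst this; simp [hα1]
  have hY2 : (if i + 1 < N then (-d i) * h (i + 1) j else 0) = (-d i) * h (i + 1) j := by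
    split_ifs with hc
    · rfl
    · have h1 : i + 1 = N := by omega
      have h2 : h (i + 1) j = 0 := by
        simp only [h]
        rw [if_neg (by omega)]
        split_ifs
        · rw [h1, hαN]
        · rfl
      rw [h2]; simp
  rw [hX, hX2, hY2]
  clear hX hX2 hY2
  by_cases c1 : i ≤ j
  · simp only [c1, if_true]
    have hg := hγeq (j + 1) (by omega) (by omega) t
    have a1 : h i j = γ (j + 1) t := by simp [h, c1]
    have a2 : h i (j + 1) = γ (j + 2) t := by simp [h, show i ≤ j + 1 by omega]
    have a3 : h (i - 1) j = γ (j + 1) t := by simp only [h]; rw [if_pos (by omega)]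
    have hdj := hd j hj
    have hg' : deriv (γ (j + 1)) t = p * (α (j + 1) t * γ (j + 1) t - α (j + 2) t * γ (j + 2) t)
        + q * (α (j + 2) t * d j - α (j + 1) t / (γ j t - α (j + 1) t)) := by
      rw [hg]; simp only [d, Nat.add_sub_cancel]; ring
    have : deriv (fun s => γ (j + 1) s) t = deriv (γ (j + 1)) t := rfl
    rw [this, hg', a1, a2, a3]
    rcases Nat.lt_or_ge i j with c2 | c2
    · obtain ⟨m, rfl⟩ : ∃ m, j = m + 1 := ⟨j - 1, by omega⟩
      have a4 : h (i + 1) (m + 1) = γ (m + 2) t := by simp only [h]; rw [if_pos (by omega)]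
      have a5 : h i m = γ (m + 1) t := by simp only [h]; rw [if_pos (by omega)]
      have hdm := hd m (by omega)
      rw [if_pos (by omega), Nat.add_sub_cancel, a4, a5, div_eq_mul_one_div]
      change _ + q * (_ - _ * d m) = _
      linear_combination q * hdm - q * hdj
    · have : i = j := by omega
      subst this
      have a4 : h (i + 1) i = α (i + 2) t := by simp [h]
      rw [a4]
      rcases Nat.eq_zero_or_pos i with rfl | c3
      · simp [hα1]
        ring
      · obtain ⟨m, rfl⟩ : ∃ m, i = m + 1 := ⟨i - 1, by omega⟩
        have a5 : h (m + 1) m = α (m + 2) t := by simp [h]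
        rw [if_pos (by omega), Nat.add_sub_cancel, a5, div_eq_mul_one_div]
        change _ + q * (_ - _ * d m) = _
        ring
  · simp only [c1, if_false]
    have b1 : (if 1 ≤ j then h i (j - 1) * (-d (j - 1)) else 0) = 0 := by
      split_ifs
      · simp only [h]
        rw [if_neg (by omega), if_neg (by omega)]; simp
      · rfl
    have a4 : h (i + 1) j = 0 := by
      simp only [h]
      rw [if_neg (by omega), if_neg (by omega)]
    rw [b1, a4]
    by_cases c2 : i = j + 1
    · subst c2
      simp only [if_true]
      have a1 : h (j + 1) j = α (j + 2) t := by simp [h]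
      have a2 : h (j + 1) (j + 1) = γ (j + 2) t := by simp [h]
      have a3 : h (j + 1 - 1) j = γ (j + 1) t := by simp [h]
      have hg := hαeq (j + 2) (by omega) (by omega) t
      have : deriv (fun s => α (j + 1 + 1) s) t = deriv (α (j + 2)) t := rfl
      rw [this, hg, a1, a2, a3]
      simp only [d, Nat.add_sub_cancel, show j + 2 - 1 = j + 1 by omega]
      ring
    · simp only [c2, if_false]
      have a1 : h i j = 0 := by simp [h, c1, c2]
      rw [a1]
      by_cases c3 : i = j + 2
      · subst c3
        have a2 : h (j + 2) (j + 1) = α (j + 3) t := by simp [h]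
        have a3 : h (j + 2 - 1) j = α (j + 2) t := by simp [h]
        rw [a2, a3]
        simp
      · have a2 : h i (j + 1) = 0 := by
          simp only [h]
          rw [if_neg (by omega), if_neg (by omega)]
        have a3 : h (i - 1) j = 0 := by
          simp only [h]
          rw [if_neg (by omega), if_neg (by omega)]
        rw [a2, a3]
        simp
end

section
/- Let q > 0 and δ > 0 be real. Define β_0(t) = 1, β_n(t) = √q for n ≥ 1, α_0(t) = −1, α_1(t) = 0, and α_{n+1}(t) = n/(2(t+δ)) for n ≥ 1. Then for all t ≥ 0 and all n ≥ 1 these functions satisfy the extended relativistic Toda lattice equations with p = 1: β_n'(t) = β_n(t)·(α_n(t) − α_{n+1}(t)) + q·β_n(t)·( α_{n+1}(t)/(β_{n+1}(t)·β_n(t)) − α_n(t)/(β_n(t)·β_{n−1}(t)) ) and α_n'(t) = α_n(t)·(α_{n−1}(t) + β_{n−1}(t) − α_{n+1}(t) − β_n(t)) + q·α_n(t)·( 1/β_{n−1}(t) − 1/β_n(t) ). In particular β_n'(t) = 0 and α_n'(t) = −(n−1)/(2(t+δ)²) for n ≥ 2. -/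
theorem stmt_12 (q δ : ℝ) (hq : 0 < q) (hδ : 0 < δ) (β α : ℕ → ℝ → ℂ)
    (hβ0 : ∀ t, β 0 t = 1)
    (hβ : ∀ n, 1 ≤ n → ∀ t : ℝ, β n t = (Real.sqrt q : ℂ))
    (hα0 : ∀ t, α 0 t = -1) (hα1 : ∀ t, α 1 t = 0)
    (hα : ∀ n : ℕ, 1 ≤ n → ∀ t : ℝ, α (n + 1) t = (n : ℂ) / (2 * ((t : ℂ) + (δ : ℂ)))) :
    ∀ t : ℝ, 0 ≤ t → ∀ n, 1 ≤ n →
      (deriv (β n) t =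
        β n t * (α n t - α (n + 1) t) +
          (q : ℂ) * β n t *
            (α (n + 1) t / (β (n + 1) t * β n t) - α n t / (β n t * β (n - 1) t))) ∧
      (deriv (α n) t =
        α n t * (α (n - 1) t + β (n - 1) t - α (n + 1) t - β n t) +
          (q : ℂ) * α n t * (1 / β (n - 1) t - 1 / β n t)) ∧
      deriv (β n) t = 0 ∧
      (2 ≤ n → deriv (α n) t = -(((n : ℂ) - 1) / (2 * ((t : ℂ) + (δ : ℂ)) ^ 2))) := by
  intro t ht n hn
  have hr : ((Real.sqrt q : ℝ) : ℂ) ≠ 0 := by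
    exact_mod_cast (Real.sqrt_pos.mpr hq).ne'
  have hqr : (q : ℂ) = (Real.sqrt q : ℂ) * (Real.sqrt q : ℂ) := by
    exact_mod_cast (Real.mul_self_sqrt hq.le).symm
  have hs : (t : ℂ) + (δ : ℂ) ≠ 0 := by
    have h : t + δ ≠ 0 := by positivity
    exact_mod_cast h
  have hA : ∀ m : ℕ, ∀ u : ℝ, α (m + 1) u = (m : ℂ) / (2 * ((u : ℂ) + (δ : ℂ))) := by
    intro m u
    rcases Nat.eq_zero_or_pos m with h | h
    · subst h
      simp [hα1]
    · exact hα m h u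
  have hdA : ∀ m : ℕ, deriv (α (m + 1)) t = -((m : ℂ) / (2 * ((t : ℂ) + (δ : ℂ)) ^ 2)) := by
    intro m
    have he : α (m + 1) = fun u : ℝ => (m : ℂ) / (2 * ((u : ℂ) + (δ : ℂ))) := funext (hA m)
    rw [he]
    have h1 : HasDerivAt (fun u : ℝ => 2 * ((u : ℂ) + (δ : ℂ))) (2 * 1) t :=
      ((Complex.ofRealCLM.hasDerivAt (x := t)).add_const (δ : ℂ)).const_mul 2
    have h2 := (hasDerivAt_const t (m : ℂ)).div h1 (mul_ne_zero two_ne_zero hs)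
    refine h2.deriv.trans ?_
    field_simp
    ring
  have hdB : deriv (β n) t = 0 := by
    have he : β n = fun _ : ℝ => (Real.sqrt q : ℂ) := funext (hβ n hn)
    rw [he]
    simp
  obtain ⟨m, rfl⟩ : ∃ m, n = m + 1 := ⟨n - 1, by omega⟩
  refine ⟨?_, ?_, hdB, ?_⟩
  · rw [hdB, hβ (m + 1) hn, hβ (m + 1 + 1) (by omega), hA (m + 1), hA m, hqr]
    rcases m with _ | k
    · field_simp
      simp
    · rw [show k + 1 + 1 - 1 = k + 1 by omega, hβ (k + 1) (by omega)]
      field_simp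
      ring
  · rw [hdA m, hβ (m + 1) hn, hA (m + 1), hA m, Nat.add_sub_cancel]
    rcases m with _ | k
    · simp
    · rw [hβ (k + 1) (by omega), hA k]
      push_cast
      field_simp
      ring
  · intro _
    rw [hdA m]
    push_cast
    ring
end

section
/- Suppose the β_n, α_n satisfy, for all n ≥ 1 and all t, the extended relativistic Toda lattice equation β_n'(t) = conj(q)·β_n(t)·(α_n(t) − α_{n+1}(t)) + q·β_n(t)·( α_{n+1}(t)/(β_{n+1}(t)·β_n(t)) − α_n(t)/(β_n(t)·β_{n−1}(t)) ). Then for every n ≥ 1 and every t, c_n'(t) = 4·Re(q)·[ d_n(t)·(c_n(t)+c_{n−1}(t))/(1+c_{n−1}(t)²) − d_{n+1}(t)·(c_n(t)+c_{n+1}(t))/(1+c_{n+1}(t)²) ] + 4·Im(q)·[ d_n(t)·(1−c_n(t)c_{n−1}(t))/(1+c_{n−1}(t)²) − d_{n+1}(t)·(1−c_n(t)c_{n+1}(t))/(1+c_{n+1}(t)²) ]; in particular, since d_1 = 0, for n = 1 this reads c_1'(t) = −4·Re(q)·d_2(t)·(c_1(t)+c_2(t))/(1+c_2(t)²) − 4·Im(q)·d_2(t)·(1−c_1(t)c_2(t))/(1+c_2(t)²).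 -/
open Complex in
lemma aux_ne (x : ℝ) : (1 + I * (x : ℂ)) ≠ 0 := by
  intro h
  have := congrArg Complex.re h
  simp at this

open Complex in
lemma aux_ne' (x : ℝ) : (1 - I * (x : ℂ)) ≠ 0 := by
  intro h
  have := congrArg Complex.re h
  simp at this

open Complex in
lemma aux_sq (x : ℝ) : (1 + (x : ℂ) ^ 2) = (1 + I * x) * (1 - I * x) := by
  linear_combination ((x : ℂ) ^ 2) * I_sq

open Complex in
lemma aux_term (q : ℂ) (x y d : ℝ) :
    (starRingEnd ℂ) q * (4 * (d : ℂ) / ((1 + I * x) * (1 + I * y))) -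
      q * (4 * (d : ℂ) / ((1 - I * x) * (1 - I * y))) =
    -2 * I * ((4 * q.re * (d * (x + y) / (1 + y ^ 2)) +
      4 * q.im * (d * (1 - x * y) / (1 + y ^ 2)) : ℝ) : ℂ) / (1 + (x : ℂ) ^ 2) := by
  have h1 := aux_ne x
  have h2 := aux_ne y
  have h3 := aux_ne' x
  have h4 := aux_ne' y
  have hq : q = q.re + q.im * I := (re_add_im q).symm
  have hp : (starRingEnd ℂ) q = q.re - q.im * I := by
    apply Complex.ext <;> simp
  rw [hp]
  nth_rewrite 3 [hq]
  generalize q.re = a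
  generalize q.im = b
  push_cast
  rw [aux_sq x, aux_sq y]
  field_simp
  have hI := I_sq
  ring_nf
  simp only [show I ^ 3 = -I by rw [pow_succ, I_sq]; ring]
  ring

open Complex in
lemma aux_deriv (f : ℝ → ℝ) (t : ℝ) (hf : DifferentiableAt ℝ f t) :
    deriv (fun t => -((1 - I * (f t : ℂ)) / (1 + I * (f t : ℂ)))) t =
      -((1 - I * (f t : ℂ)) / (1 + I * (f t : ℂ))) *
        (-2 * I * ((deriv f t : ℝ) : ℂ) / (1 + (f t : ℂ) ^ 2)) := by
  have h0 : HasDerivAt (fun t => (f t : ℂ)) ((deriv f t : ℝ) : ℂ) t := hf.hasDerivAt.ofReal_comp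
  have h1 := h0.const_mul I
  have h2 := ((h1.const_sub 1).div (h1.const_add 1) (aux_ne (f t))).neg
  have h3 := aux_ne (f t)
  have h4 := aux_ne' (f t)
  refine h2.deriv.trans ?_
  rw [aux_sq]
  field_simp
  ring

theorem stmt_16 (q : ℂ) (c d : ℕ → ℝ → ℝ)
    (hcdiff : ∀ n, Differentiable ℝ (c n)) (hddiff : ∀ n, Differentiable ℝ (d n))
    (hc0 : ∀ t, c 0 t = 1) (hd1 : ∀ t, d 1 t = 0)
    (β α : ℕ → ℝ → ℂ)
    (hβ0 : ∀ t, β 0 t = 1) (hα0 : ∀ t, α 0 t = -1)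
    (hβ : ∀ n, 1 ≤ n → ∀ t, β n t =
      -((1 - Complex.I * (c n t : ℂ)) / (1 + Complex.I * (c n t : ℂ))))
    (hα : ∀ n, 1 ≤ n → ∀ t, α n t =
      4 * (d n t : ℂ) /
        ((1 + Complex.I * (c n t : ℂ)) * (1 + Complex.I * (c (n - 1) t : ℂ))))
    (hToda : ∀ n, 1 ≤ n → ∀ t, deriv (β n) t =
      (starRingEnd ℂ) q * β n t * (α n t - α (n + 1) t) +
        q * β n t *
          (α (n + 1) t / (β (n + 1) t * β n t) - α n t / (β n t * β (n - 1) t))) :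
    (∀ n, 1 ≤ n → ∀ t : ℝ, deriv (c n) t =
      4 * q.re *
          (d n t * (c n t + c (n - 1) t) / (1 + (c (n - 1) t) ^ 2) -
            d (n + 1) t * (c n t + c (n + 1) t) / (1 + (c (n + 1) t) ^ 2)) +
        4 * q.im *
          (d n t * (1 - c n t * c (n - 1) t) / (1 + (c (n - 1) t) ^ 2) -
            d (n + 1) t * (1 - c n t * c (n + 1) t) / (1 + (c (n + 1) t) ^ 2))) ∧
    (∀ t : ℝ, deriv (c 1) t =
      -(4 * q.re * (d 2 t * (c 1 t + c 2 t) / (1 + (c 2 t) ^ 2))) -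
        4 * q.im * (d 2 t * (1 - c 1 t * c 2 t) / (1 + (c 2 t) ^ 2))) := by
  have main : ∀ n, 1 ≤ n → ∀ t : ℝ, deriv (c n) t =
      4 * q.re *
          (d n t * (c n t + c (n - 1) t) / (1 + (c (n - 1) t) ^ 2) -
            d (n + 1) t * (c n t + c (n + 1) t) / (1 + (c (n + 1) t) ^ 2)) +
        4 * q.im *
          (d n t * (1 - c n t * c (n - 1) t) / (1 + (c (n - 1) t) ^ 2) -
            d (n + 1) t * (1 - c n t * c (n + 1) t) / (1 + (c (n + 1) t) ^ 2)) := by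
    intro n hn t
    have hT := hToda n hn t
    have hfun : β n = fun t => -((1 - Complex.I * (c n t : ℂ)) / (1 + Complex.I * (c n t : ℂ))) :=
      funext (hβ n hn)
    have hD : deriv (β n) t = β n t *
        (-2 * Complex.I * ((deriv (c n) t : ℝ) : ℂ) / (1 + (c n t : ℂ) ^ 2)) := by
      rw [hfun]; exact aux_deriv (c n) t (hcdiff n t)
    have x1 := aux_ne (c n t)
    have x2 := aux_ne' (c n t)
    have y1 := aux_ne (c (n + 1) t)
    have y2 := aux_ne' (c (n + 1) t)
    have z1 := aux_ne (c (n - 1) t)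
    have z2 := aux_ne' (c (n - 1) t)
    have hb : β n t ≠ 0 := by
      rw [hβ n hn]
      exact neg_ne_zero.mpr (div_ne_zero x2 x1)
    have hA1 : α (n + 1) t = 4 * (d (n + 1) t : ℂ) /
        ((1 + Complex.I * (c n t : ℂ)) * (1 + Complex.I * (c (n + 1) t : ℂ))) := by
      rw [hα (n + 1) (by omega), Nat.add_sub_cancel, mul_comm (1 + Complex.I * (c n t : ℂ))]
    have hB1 : α (n + 1) t / (β (n + 1) t * β n t) = 4 * (d (n + 1) t : ℂ) /
        ((1 - Complex.I * (c n t : ℂ)) * (1 - Complex.I * (c (n + 1) t : ℂ))) := by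
      rw [hA1, hβ n hn, hβ (n + 1) (by omega)]
      field_simp
    have hB0 : α n t / (β n t * β (n - 1) t) = 4 * (d n t : ℂ) /
        ((1 - Complex.I * (c n t : ℂ)) * (1 - Complex.I * (c (n - 1) t : ℂ))) := by
      rcases Nat.lt_or_ge 1 n with h | h
      · rw [hα n hn, hβ n hn, hβ (n - 1) (by omega)]
        field_simp
      · obtain rfl : n = 1 := by omega
        rw [hα 1 hn, hd1]
        simp
    rw [hD, hB1, hB0, mul_comm _ (β n t), mul_comm q (β n t), mul_assoc, mul_assoc, mul_assoc (β n t) q,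
      ← mul_add] at hT
    have hT2 := mul_left_cancel₀ hb hT
    rw [hA1, hα n hn] at hT2
    have e0 := aux_term q (c n t) (c (n - 1) t) (d n t)
    have e1 := aux_term q (c n t) (c (n + 1) t) (d (n + 1) t)
    have hs : (1 + (c n t : ℂ) ^ 2) ≠ 0 := by
      rw [aux_sq]; exact mul_ne_zero x1 x2
    have hk : (-2 * Complex.I) / (1 + (c n t : ℂ) ^ 2) ≠ 0 :=
      div_ne_zero (mul_ne_zero (by norm_num) Complex.I_ne_zero) hs
    have key : ((deriv (c n) t : ℝ) : ℂ) =
        ((4 * q.re * (d n t * (c n t + c (n - 1) t) / (1 + c (n - 1) t ^ 2)) +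
          4 * q.im * (d n t * (1 - c n t * c (n - 1) t) / (1 + c (n - 1) t ^ 2)) : ℝ) : ℂ) -
        ((4 * q.re * (d (n + 1) t * (c n t + c (n + 1) t) / (1 + c (n + 1) t ^ 2)) +
          4 * q.im * (d (n + 1) t * (1 - c n t * c (n + 1) t) / (1 + c (n + 1) t ^ 2)) : ℝ) : ℂ) := by
      apply mul_left_cancel₀ hk
      linear_combination hT2 + e0 - e1
    have key2 := Complex.ofReal_injective (key.trans (Complex.ofReal_sub _ _).symm)
    rw [key2]
    ring
  refine ⟨main, fun t => ?_⟩
  rw [main 1 le_rfl t, hd1]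
  ring
end

section
/- Suppose the β_n, α_n satisfy, for all n ≥ 1 and all t, both extended relativistic Toda lattice equations β_n'(t) = conj(q)·β_n(t)·(α_n(t) − α_{n+1}(t)) + q·β_n(t)·( α_{n+1}(t)/(β_{n+1}(t)·β_n(t)) − α_n(t)/(β_n(t)·β_{n−1}(t)) ) and α_n'(t) = conj(q)·α_n(t)·(α_{n−1}(t) + β_{n−1}(t) − α_{n+1}(t) − β_n(t)) + q·α_n(t)·( 1/β_{n−1}(t) − 1/β_n(t) ). Then for every n ≥ 2 and every t, d_n'(t) = 4·Re(q)·[ d_n d_{n−1}/(1+c_{n−2}²) − d_n d_{n+1}/(1+c_{n+1}²) + d_n(1−d_n)(c_{n−1}² − c_n²)/( (1+c_n²)(1+c_{n−1}²) ) ] − 4·Im(q)·[ d_n d_{n−1} c_{n−2}/(1+c_{n−2}²) − d_n d_{n+1} c_{n+1}/(1+c_{n+1}²) + d_n(1−d_n)(c_n − c_{n−1})(1 − c_n c_{n−1})/( (1+c_n²)(1+c_{n−1}²) ) ], where all functions are evaluated at t. -/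
lemma core17 (p q u0 u1 u2 u3 D1 D2 D3 X1 X2 e : ℂ)
    (h0 : u0 ≠ 0) (h1 : u1 ≠ 0) (h2 : u2 ≠ 0) (h3 : u3 ≠ 0)
    (k0 : 2 - u0 ≠ 0) (k1 : 2 - u1 ≠ 0) (k2 : 2 - u2 ≠ 0) (k3 : 2 - u3 ≠ 0)
    (hX1 : X1 = -(p * (4 * D1 / (u1 * u0) - 4 * D2 / (u2 * u1)) +
      q * (4 * D2 / ((2 - u2) * (2 - u1)) - 4 * D1 / ((2 - u1) * (2 - u0)))) * (u1 * (2 - u1)) / 2)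
    (hX2 : X2 = -(p * (4 * D2 / (u2 * u1) - 4 * D3 / (u3 * u2)) +
      q * (4 * D3 / ((2 - u3) * (2 - u2)) - 4 * D2 / ((2 - u2) * (2 - u1)))) * (u2 * (2 - u2)) / 2)
    (he : e = D2 * (p * (4 * D1 / (u1 * u0) - (2 - u1) / u1 - 4 * D3 / (u3 * u2) + (2 - u2) / u2)
      + q * (u2 / (2 - u2) - u1 / (2 - u1)) + X1 / u1 + X2 / u2)) :
    e = 2 * (q + p) * (D2 * D1 / (u0 * (2 - u0)) - D2 * D3 / (u3 * (2 - u3)) +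
        D2 * (1 - D2) * ((u2 - 1) ^ 2 - (u1 - 1) ^ 2) / ((u2 * (2 - u2)) * (u1 * (2 - u1)))) +
      2 * (q - p) * (D2 * D1 * (u0 - 1) / (u0 * (2 - u0)) - D2 * D3 * (u3 - 1) / (u3 * (2 - u3)) +
        D2 * (1 - D2) * ((u2 - u1) * (1 + (u2 - 1) * (u1 - 1))) /
          ((u2 * (2 - u2)) * (u1 * (2 - u1)))) := by
  have e1 : X1 / u1 = -(p * (4 * D1 / u0 - 4 * D2 / u2) * ((2 - u1) / u1) +
      q * (4 * D2 / (2 - u2) - 4 * D1 / (2 - u0))) / 2 := by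
    rw [hX1]; field_simp
  have e2 : X2 / u2 = -(p * (4 * D2 / u1 - 4 * D3 / u3) * ((2 - u2) / u2) +
      q * (4 * D3 / (2 - u3) - 4 * D2 / (2 - u1))) / 2 := by
    rw [hX2]; field_simp
  rw [he, e1, e2]
  field_simp
  ring

lemma u_ne17 (x : ℝ) : (1 + Complex.I * (x : ℂ)) ≠ 0 := by
  intro h
  have := congrArg Complex.re h
  simp at this

lemma v_ne17 (x : ℝ) : (2 - (1 + Complex.I * (x : ℂ))) ≠ 0 := by
  intro h
  have := congrArg Complex.re h
  norm_num at this


theorem stmt_17 (q : ℂ) (c d : ℕ → ℝ → ℝ)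
    (hcdiff : ∀ n, Differentiable ℝ (c n)) (hddiff : ∀ n, Differentiable ℝ (d n))
    (hc0 : ∀ t, c 0 t = 1) (hd1 : ∀ t, d 1 t = 0)
    (β α : ℕ → ℝ → ℂ)
    (hβ0 : ∀ t, β 0 t = 1) (hα0 : ∀ t, α 0 t = -1)
    (hβ : ∀ n, 1 ≤ n → ∀ t, β n t =
      -((1 - Complex.I * (c n t : ℂ)) / (1 + Complex.I * (c n t : ℂ))))
    (hα : ∀ n, 1 ≤ n → ∀ t, α n t =
      4 * (d n t : ℂ) /
        ((1 + Complex.I * (c n t : ℂ)) * (1 + Complex.I * (c (n - 1) t : ℂ))))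
    (hTodaβ : ∀ n, 1 ≤ n → ∀ t, deriv (β n) t =
      (starRingEnd ℂ) q * β n t * (α n t - α (n + 1) t) +
        q * β n t *
          (α (n + 1) t / (β (n + 1) t * β n t) - α n t / (β n t * β (n - 1) t)))
    (hTodaα : ∀ n, 1 ≤ n → ∀ t, deriv (α n) t =
      (starRingEnd ℂ) q * α n t * (α (n - 1) t + β (n - 1) t - α (n + 1) t - β n t) +
        q * α n t * (1 / β (n - 1) t - 1 / β n t)) :
    ∀ n, 2 ≤ n → ∀ t : ℝ, deriv (d n) t =
      4 * q.re *
          (d n t * d (n - 1) t / (1 + (c (n - 2) t) ^ 2) -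
            d n t * d (n + 1) t / (1 + (c (n + 1) t) ^ 2) +
            d n t * (1 - d n t) * ((c (n - 1) t) ^ 2 - (c n t) ^ 2) /
              ((1 + (c n t) ^ 2) * (1 + (c (n - 1) t) ^ 2))) -
        4 * q.im *
          (d n t * d (n - 1) t * c (n - 2) t / (1 + (c (n - 2) t) ^ 2) -
            d n t * d (n + 1) t * c (n + 1) t / (1 + (c (n + 1) t) ^ 2) +
            d n t * (1 - d n t) * (c n t - c (n - 1) t) * (1 - c n t * c (n - 1) t) /
              ((1 + (c n t) ^ 2) * (1 + (c (n - 1) t) ^ 2))) := by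
  intro n hn t
  obtain ⟨m, rfl⟩ : ∃ m, n = m + 2 := ⟨n - 2, by omega⟩
  have hu : ∀ k s, HasDerivAt (fun s => 1 + Complex.I * (c k s : ℂ))
      (Complex.I * ((deriv (c k) s : ℝ) : ℂ)) s := fun k s =>
    (((hcdiff k s).hasDerivAt.ofReal_comp).const_mul Complex.I).const_add 1
  have hconj : ∀ k, α (k + 1) t / (β (k + 1) t * β k t) =
      4 * (d (k + 1) t : ℂ) / ((2 - (1 + Complex.I * (c (k + 1) t : ℂ))) *
        (2 - (1 + Complex.I * (c k t : ℂ)))) := by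
    intro k
    have a1 := u_ne17 (c (k + 1) t)
    have a2 := v_ne17 (c (k + 1) t)
    have a3 := u_ne17 (c k t)
    have a4 := v_ne17 (c k t)
    rcases k with _ | k
    · rw [hα 1 le_rfl]; simp [hd1]
    · rw [hα _ (by omega), hβ _ (by omega), hβ (k + 1) (by omega)]
      simp only [Nat.add_sub_cancel]
      have r : ∀ z : ℂ, 1 - z = 2 - (1 + z) := fun z => by ring
      rw [r, r]
      field_simp
  have hX : ∀ k, Complex.I * ((deriv (c (k + 1)) t : ℝ) : ℂ) =
      -((starRingEnd ℂ) q * (α (k + 1) t - α (k + 2) t) +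
        q * (α (k + 2) t / (β (k + 2) t * β (k + 1) t) - α (k + 1) t / (β (k + 1) t * β k t))) *
      ((1 + Complex.I * (c (k + 1) t : ℂ)) * (2 - (1 + Complex.I * (c (k + 1) t : ℂ)))) / 2 := by
    intro k
    have a1 := u_ne17 (c (k + 1) t)
    have a2 := v_ne17 (c (k + 1) t)
    have hb : β (k + 1) = fun s => -((2 - (1 + Complex.I * (c (k + 1) s : ℂ))) /
        (1 + Complex.I * (c (k + 1) s : ℂ))) := by
      funext s; rw [hβ _ (by omega)]; congr 2; ring
    have hD := ((((hu (k + 1) t).const_sub 2).fun_div (hu (k + 1) t) a1).fun_neg).deriv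
    rw [← hb] at hD
    have hT := hTodaβ (k + 1) (by omega) t
    rw [hD] at hT
    simp only [Nat.add_sub_cancel] at hT
    generalize hW : (α (k + 1 + 1) t / (β (k + 1 + 1) t * β (k + 1) t) -
      α (k + 1) t / (β (k + 1) t * β k t)) = W at hT ⊢
    rw [congrFun hb t] at hT
    generalize (1 + Complex.I * (c (k + 1) t : ℂ)) = u at *
    generalize Complex.I * ((deriv (c (k + 1)) t : ℝ) : ℂ) = X at *
    field_simp at hT
    have hT' : X * 2 = -(u * (2 - u) *
      ((starRingEnd ℂ) q * (α (k + 1) t - α (k + 2) t) + q * W)) := by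
      linear_combination hT
    linear_combination hT' / 2
  have hX1 := hX m
  have hX2 := hX (m + 1)
  rw [hconj, hconj, hα _ (by omega), hα _ (by omega)] at hX1
  rw [hconj, hconj, hα _ (by omega), hα _ (by omega)] at hX2
  have hA : α (m + 2) = fun s => 4 * (d (m + 2) s : ℂ) /
      ((1 + Complex.I * (c (m + 2) s : ℂ)) * (1 + Complex.I * (c (m + 1) s : ℂ))) := by
    funext s; exact hα _ (by omega) s
  have hDα := ((((hddiff (m + 2) t).hasDerivAt.ofReal_comp).const_mul 4).fun_div
    ((hu (m + 2) t).fun_mul (hu (m + 1) t))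
    (mul_ne_zero (u_ne17 _) (u_ne17 _))).deriv
  rw [← hA] at hDα
  have hT := hTodaα (m + 2) (by omega) t
  rw [hDα] at hT
  simp only [show m + 2 - 1 = m + 1 from rfl, show m + 2 - 2 = m from rfl,
    show m + 2 + 1 = m + 3 from rfl, show m + 1 + 1 = m + 2 from rfl,
    show m + 1 + 2 = m + 3 from rfl, show m + 3 - 1 = m + 2 from rfl,
    Nat.add_sub_cancel] at *
  rw [hα (m + 1) (by omega), hα (m + 2) (by omega), hα (m + 3) (by omega),
    hβ (m + 1) (by omega), hβ (m + 2) (by omega)] at hT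
  simp only [show m + 2 - 1 = m + 1 from rfl, show m + 3 - 1 = m + 2 from rfl,
    Nat.add_sub_cancel] at hT
  have r : ∀ z : ℂ, 1 - z = 2 - (1 + z) := fun z => by ring
  rw [r, r] at hT
  have key := core17 ((starRingEnd ℂ) q) q _ _ _ _ (d (m + 1) t) (d (m + 2) t) (d (m + 3) t) _ _
    ((deriv (d (m + 2)) t : ℝ) : ℂ)
    (u_ne17 (c m t)) (u_ne17 (c (m + 1) t)) (u_ne17 (c (m + 2) t)) (u_ne17 (c (m + 3) t))
    (v_ne17 (c m t)) (v_ne17 (c (m + 1) t)) (v_ne17 (c (m + 2) t)) (v_ne17 (c (m + 3) t))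
    hX1 hX2 (by
      clear hX1 hX2
      have a1 := u_ne17 (c (m + 1) t)
      have a2 := v_ne17 (c (m + 1) t)
      have a3 := u_ne17 (c (m + 2) t)
      have a4 := v_ne17 (c (m + 2) t)
      have a5 := u_ne17 (c m t)
      have a6 := u_ne17 (c (m + 3) t)
      generalize (1 + Complex.I * (c (m + 1) t : ℂ)) = u1 at *
      generalize (1 + Complex.I * (c (m + 2) t : ℂ)) = u2 at *
      generalize (1 + Complex.I * (c (m + 3) t : ℂ)) = u3 at *
      generalize (1 + Complex.I * (c m t : ℂ)) = u0 at *
      generalize Complex.I * ((deriv (c (m + 1)) t : ℝ) : ℂ) = X1 at *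
      generalize Complex.I * ((deriv (c (m + 2)) t : ℝ) : ℂ) = X2 at *
      generalize ((deriv (d (m + 2)) t : ℝ) : ℂ) = e at *
      have i1 : 1 / -((2 - u1) / u1) = -(u1 / (2 - u1)) := by field_simp
      have i2 : 1 / -((2 - u2) / u2) = -(u2 / (2 - u2)) := by field_simp
      rw [i1, i2] at hT
      generalize u1 / (2 - u1) = w1 at *
      generalize u2 / (2 - u2) = w2 at *
      generalize hz1 : (2 - u1) / u1 = z1 at *
      generalize hz2 : (2 - u2) / u2 = z2 at *
      generalize hz3 : 4 * (d (m + 1) t : ℂ) / (u1 * u0) = z3 at *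
      generalize hz4 : 4 * (d (m + 3) t : ℂ) / (u3 * u2) = z4 at *
      field_simp at hT ⊢
      linear_combination hT)
  have hq : q = (q.re : ℂ) + q.im * Complex.I := (Complex.re_add_im q).symm
  have hp : (starRingEnd ℂ) q = (q.re : ℂ) - q.im * Complex.I := by
    apply Complex.ext <;> simp
  have hs1 : q + (starRingEnd ℂ) q = 2 * q.re := by rw [hp]; linear_combination hq
  have hs2 : q - (starRingEnd ℂ) q = 2 * q.im * Complex.I := by rw [hp]; linear_combination hq
  have I2 := Complex.I_mul_I
  have hn : ∀ x : ℝ, (1 + Complex.I * (x : ℂ)) * (2 - (1 + Complex.I * (x : ℂ))) = 1 + (x : ℂ) ^ 2 := by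
    intro x; linear_combination (-(x : ℂ) ^ 2) * I2
  have hsq : ∀ x : ℝ, (1 + Complex.I * (x : ℂ) - 1) ^ 2 = -(x : ℂ) ^ 2 := by
    intro x; linear_combination ((x : ℂ) ^ 2) * I2
  have hpr : ∀ x y : ℝ, (1 + Complex.I * (x : ℂ) - (1 + Complex.I * (y : ℂ))) *
      (1 + (1 + Complex.I * (x : ℂ) - 1) * (1 + Complex.I * (y : ℂ) - 1)) =
      Complex.I * ((x - y) * (1 - x * y)) := by
    intro x y; linear_combination (Complex.I * (x - y) * x * y) * I2
  rw [hs1, hs2, hpr] at key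
  simp only [hn, hsq] at key
  apply Complex.ofReal_injective
  rw [key]
  push_cast
  simp only [div_eq_mul_inv]
  generalize ((1 + (c m t : ℂ) ^ 2))⁻¹ = g0
  generalize ((1 + (c (m + 3) t : ℂ) ^ 2))⁻¹ = g3
  generalize ((1 + (c (m + 2) t : ℂ) ^ 2) * (1 + (c (m + 1) t : ℂ) ^ 2))⁻¹ = g
  linear_combination (4 * q.im * (d (m + 2) t * d (m + 1) t * c m t * g0 -
    d (m + 2) t * d (m + 3) t * c (m + 3) t * g3 + d (m + 2) t * (1 - d (m + 2) t) *
      ((c (m + 2) t - c (m + 1) t) * (1 - c (m + 2) t * c (m + 1) t)) * g)) * I2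
end
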